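/- arXiv:2412.13573 — 7 statements merged into one kernel-verified Lean document; each statement's English description precedes it below -/
import Mathlib

section
/- Fix a probability measure 𝒟 on Z, a probability measure π on Θ (the prior), an integer n ≥ 2, and a real δ ∈ (0,1]. Then the 𝒟^{⊗n}-probability of the following event over S = (z_1,…,z_n) is at least 1 − δ: for every probability measure ρ on Θ (the posterior), ∫ L(θ,𝒟) dρ(θ) ≤ ∫ L̂(θ,S) dρ(θ) + √( (KL(ρ‖π) + log(n/δ)) / (2(n−1)) ), where the right-hand side is interpreted as +∞ if KL(ρ‖π) = +∞. -/
open MeasureTheory Real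
open scoped ENNReal

open Classical in
/-- Kullback–Leibler divergence between two measures: `∫ log (dμ/dν) dμ` when `μ ≪ ν`
(and the log-likelihood ratio is integrable), `+∞` otherwise. -/
noncomputable def klDiv {Ω : Type*} [MeasurableSpace Ω] (μ ν : Measure Ω) : ℝ≥0∞ :=
  if μ ≪ ν ∧ Integrable (llr μ ν) μ then ENNReal.ofReal (∫ x, llr μ ν x ∂μ) else ⊤

/-!
Duality, rather than a union bound over hypotheses, makes the bound uniform over posteriors. By
the Donsker–Varadhan inequality, `∫ F dρ ≤ KL(ρ‖π) + log ∫ exp F dπ` for every `ρ`, so a single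
application of Markov's inequality to the nonnegative random variable `∫ exp F(S, θ) dπ(θ)` controls
all posteriors at once. McAllester's choice is `F = 2 (n - 1) (gap⁺)²`, where `gap` is the
population risk minus the empirical risk: Hoeffding's inequality bounds the tail of `gap` by
`exp (-2 n x²)`, so the rate `2 (n - 1) < 2 n` leaves `exp F` with expectation at most
`2 n / (2 n - 2 (n - 1)) = n`. Jensen's inequality then turns the bound on `∫ (gap⁺)² dρ` into one
on `∫ gap dρ`.
-/

section KullbackLeibler

variable {Ω : Type*} [MeasurableSpace Ω] {μ ν : Measure Ω}

lemma klDiv_ne_top_iff : klDiv μ ν ≠ ⊤ ↔ μ ≪ ν ∧ Integrable (llr μ ν) μ := by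
  unfold klDiv
  split_ifs with h <;> simp [h]

lemma integral_llr_le_toReal_klDiv (h : klDiv μ ν ≠ ⊤) :
    ∫ x, llr μ ν x ∂μ ≤ (klDiv μ ν).toReal := by
  rw [klDiv, if_pos (klDiv_ne_top_iff.1 h), ENNReal.toReal_ofReal']
  exact le_max_left _ _

/-- The Donsker–Varadhan inequality: Gibbs' inequality for `μ` against the tilted measure
`exp f dν / ∫ exp f dν`. -/
lemma integral_le_toReal_klDiv_add_log_integral_exp [IsProbabilityMeasure μ] [SigmaFinite ν]
    {f : Ω → ℝ} (hkl : klDiv μ ν ≠ ⊤) (hfμ : Integrable f μ)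
    (hfν : Integrable (fun x ↦ exp (f x)) ν) :
    ∫ x, f x ∂μ ≤ (klDiv μ ν).toReal + log (∫ x, exp (f x) ∂ν) := by
  obtain ⟨hμν, hllr⟩ := klDiv_ne_top_iff.1 hkl
  have : NeZero ν := ⟨fun hν ↦ IsProbabilityMeasure.ne_zero μ
    (Measure.absolutelyContinuous_zero_iff.1 (hν ▸ hμν))⟩
  have : IsProbabilityMeasure (ν.tilted f) := isProbabilityMeasure_tilted hfν
  have gibbs : 0 ≤ ∫ x, llr μ (ν.tilted f) x ∂μ := by
    simpa using InformationTheory.integral_llr_add_sub_measure_univ_nonneg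
      (hμν.trans (absolutelyContinuous_tilted hfν)) (integrable_llr_tilted_right hμν hfμ hllr hfν)
  rw [integral_llr_tilted_right hμν hfμ hfν hllr] at gibbs
  linarith [integral_llr_le_toReal_klDiv hkl]

end KullbackLeibler

section PACBayes

variable {Ω Θ : Type*} [MeasurableSpace Ω] [MeasurableSpace Θ]
  {P : Measure Ω} [IsProbabilityMeasure P] {M δ : ℝ}

lemma ofReal_one_sub_le_measure_lt_of_lintegral_le {f : Ω → ℝ≥0∞} (hf : Measurable f)
    (hM : 0 < M) (hδ : 0 < δ) (hfM : ∫⁻ ω, f ω ∂P ≤ ENNReal.ofReal M) :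
    ENNReal.ofReal (1 - δ) ≤ P {ω | f ω < ENNReal.ofReal (M / δ)} := by
  have hMδ : 0 < M / δ := by positivity
  have markov : P {ω | ENNReal.ofReal (M / δ) ≤ f ω} ≤ ENNReal.ofReal δ :=
    calc P {ω | ENNReal.ofReal (M / δ) ≤ f ω}
      _ ≤ (∫⁻ ω, f ω ∂P) / ENNReal.ofReal (M / δ) :=
        meas_ge_le_lintegral_div hf.aemeasurable (by simpa using hMδ) ENNReal.ofReal_ne_top
      _ ≤ ENNReal.ofReal M / ENNReal.ofReal (M / δ) := ENNReal.div_le_div_right hfM _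
      _ = ENNReal.ofReal δ := by rw [← ENNReal.ofReal_div_of_pos hMδ, div_div_cancel₀ hM.ne']
  have hcompl : {ω | f ω < ENNReal.ofReal (M / δ)} = {ω | ENNReal.ofReal (M / δ) ≤ f ω}ᶜ := by
    ext
    simp
  rw [hcompl, prob_compl_eq_one_sub (measurableSet_le measurable_const hf),
    ENNReal.ofReal_sub _ hδ.le, ENNReal.ofReal_one]
  exact tsub_le_tsub_left markov _

lemma ofReal_one_sub_le_measure_forall_integral_le_klDiv_add_log
    {prior : Measure Θ} [IsProbabilityMeasure prior] {F : Ω → Θ → ℝ}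
    (hF : Measurable (Function.uncurry F)) (hM : 0 < M) (hδ : 0 < δ)
    (hFM : ∀ᵐ θ ∂prior, ∫⁻ ω, ENNReal.ofReal (exp (F ω θ)) ∂P ≤ ENNReal.ofReal M) :
    ENNReal.ofReal (1 - δ) ≤
      P {ω | ∀ ρ : Measure Θ, IsProbabilityMeasure ρ → klDiv ρ prior ≠ ⊤ → Integrable (F ω) ρ →
        ∫ θ, F ω θ ∂ρ ≤ (klDiv ρ prior).toReal + log (M / δ)} := by
  have hexp : Measurable (Function.uncurry fun ω θ ↦ ENNReal.ofReal (exp (F ω θ))) :=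
    (measurable_exp.comp hF).ennreal_ofReal
  have hmean : ∫⁻ ω, ∫⁻ θ, ENNReal.ofReal (exp (F ω θ)) ∂prior ∂P ≤ ENNReal.ofReal M := by
    rw [lintegral_lintegral_swap hexp.aemeasurable]
    exact (lintegral_mono_ae hFM).trans (by simp)
  refine (ofReal_one_sub_le_measure_lt_of_lintegral_le hexp.lintegral_prod_right' hM hδ
    hmean).trans (measure_mono fun ω hω ρ _ hkl hFρ ↦ ?_)
  have hexp_prior : Integrable (fun θ ↦ exp (F ω θ)) prior :=
    (lintegral_ofReal_ne_top_iff_integrable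
      (measurable_exp.comp (hF.comp measurable_prodMk_left)).aestronglyMeasurable
      (ae_of_all _ fun θ ↦ (exp_pos _).le)).1 (ne_top_of_lt hω)
  have hle : ∫ θ, exp (F ω θ) ∂prior ≤ M / δ := by
    rw [← ENNReal.ofReal_le_ofReal_iff (by positivity),
      ofReal_integral_eq_lintegral_ofReal hexp_prior (ae_of_all _ fun θ ↦ (exp_pos _).le)]
    exact hω.le
  calc ∫ θ, F ω θ ∂ρ
    _ ≤ (klDiv ρ prior).toReal + log (∫ θ, exp (F ω θ) ∂prior) :=
      integral_le_toReal_klDiv_add_log_integral_exp hkl hFρ hexp_prior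
    _ ≤ (klDiv ρ prior).toReal + log (M / δ) := by
      gcongr
      exact integral_exp_pos hexp_prior

end PACBayes

section Moments

variable {Ω : Type*} [MeasurableSpace Ω] {P : Measure Ω} [IsProbabilityMeasure P]

lemma integral_le_sqrt_integral_sq_posPart {f : Ω → ℝ} (hf : MemLp f 2 P) :
    ∫ ω, f ω ∂P ≤ √(∫ ω, (f ω)⁺ ^ 2 ∂P) := by
  have hpos : MemLp (fun ω ↦ (f ω)⁺) 2 P := hf.pos_part
  have jensen : (∫ ω, (f ω)⁺ ∂P) ^ 2 ≤ ∫ ω, (f ω)⁺ ^ 2 ∂P := by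
    have hvar := ProbabilityTheory.variance_nonneg (fun ω ↦ (f ω)⁺) P
    rw [ProbabilityTheory.variance_eq_sub hpos] at hvar
    exact sub_nonneg.1 hvar
  calc ∫ ω, f ω ∂P
    _ ≤ ∫ ω, (f ω)⁺ ∂P :=
      integral_mono (hf.integrable one_le_two) (hpos.integrable one_le_two) fun ω ↦ le_posPart _
    _ ≤ √(∫ ω, (f ω)⁺ ^ 2 ∂P) := le_sqrt_of_sq_le jensen

lemma lintegral_ofReal_le_of_measure_lt_le_rpow {f : Ω → ℝ} {p : ℝ} (hf : AEMeasurable f P)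
    (hf0 : 0 ≤ᵐ[P] f) (hp : 1 < p)
    (htail : ∀ t, 1 < t → P {ω | t < f ω} ≤ ENNReal.ofReal (t ^ (-p))) :
    ∫⁻ ω, ENNReal.ofReal (f ω) ∂P ≤ ENNReal.ofReal (p / (p - 1)) := by
  have hp1 : 0 < p - 1 := sub_pos.2 hp
  have hIoc : ∫⁻ t in Set.Ioc (0 : ℝ) 1, P {ω | t < f ω} ≤ 1 :=
    (lintegral_mono fun _ ↦ prob_le_one).trans (by simp)
  have hIoi : ∫⁻ t in Set.Ioi (1 : ℝ), P {ω | t < f ω} ≤ ENNReal.ofReal (1 / (p - 1)) :=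
    calc ∫⁻ t in Set.Ioi (1 : ℝ), P {ω | t < f ω}
      _ ≤ ∫⁻ t in Set.Ioi (1 : ℝ), ENNReal.ofReal (t ^ (-p)) :=
        setLIntegral_mono' measurableSet_Ioi htail
      _ = ENNReal.ofReal (∫ t in Set.Ioi (1 : ℝ), t ^ (-p)) := by
        refine (ofReal_integral_eq_lintegral_ofReal
          (integrableOn_Ioi_rpow_of_lt (neg_lt_neg hp) one_pos) ?_).symm
        filter_upwards [ae_restrict_mem measurableSet_Ioi] with t ht
        exact rpow_nonneg (zero_le_one.trans (le_of_lt ht)) _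
      _ = ENNReal.ofReal (1 / (p - 1)) := by
        rw [integral_Ioi_rpow_of_lt (neg_lt_neg hp) one_pos, one_rpow, neg_add_eq_sub,
          ← neg_sub p 1, neg_div_neg_eq]
  calc ∫⁻ ω, ENNReal.ofReal (f ω) ∂P
    _ = ∫⁻ t in Set.Ioc (0 : ℝ) 1 ∪ Set.Ioi 1, P {ω | t < f ω} := by
      rw [lintegral_eq_lintegral_meas_lt P hf0 hf, Set.Ioc_union_Ioi_eq_Ioi zero_le_one]
    _ ≤ 1 + ENNReal.ofReal (1 / (p - 1)) :=
      (lintegral_union_le _ _ _).trans (add_le_add hIoc hIoi)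
    _ = ENNReal.ofReal (p / (p - 1)) := by
      rw [← ENNReal.ofReal_one, ← ENNReal.ofReal_add zero_le_one (by positivity)]
      congr 1
      field_simp
      ring

lemma lintegral_exp_mul_sq_posPart_le {Y : Ω → ℝ} {a c : ℝ} (hY : AEMeasurable Y P) (ha : 0 < a)
    (hac : a < c) (htail : ∀ x, 0 < x → P.real {ω | x ≤ Y ω} ≤ exp (-(c * x ^ 2))) :
    ∫⁻ ω, ENNReal.ofReal (exp (a * (Y ω)⁺ ^ 2)) ∂P ≤ ENNReal.ofReal (c / (c - a)) := by
  have hexp_tail : ∀ t, 1 < t →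
      P {ω | t < exp (a * (Y ω)⁺ ^ 2)} ≤ ENNReal.ofReal (t ^ (-(c / a))) := by
    intro t ht
    have ht0 : 0 < t := one_pos.trans ht
    have hlog : 0 < log t / a := div_pos (log_pos ht) ha
    have hsub : {ω | t < exp (a * (Y ω)⁺ ^ 2)} ⊆ {ω | √(log t / a) ≤ Y ω} := by
      intro ω (hω : t < exp (a * (Y ω)⁺ ^ 2))
      rw [← log_lt_iff_lt_exp ht0, ← div_lt_iff₀' ha] at hω
      have hlt : √(log t / a) < (Y ω)⁺ := lt_of_pow_lt_pow_left₀ 2 (posPart_nonneg _) <| by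
        rwa [sq_sqrt hlog.le]
      exact ((lt_sup_iff.1 hlt).resolve_right (sqrt_nonneg _).not_gt).le
    calc P {ω | t < exp (a * (Y ω)⁺ ^ 2)}
      _ ≤ P {ω | √(log t / a) ≤ Y ω} := measure_mono hsub
      _ ≤ ENNReal.ofReal (exp (-(c * √(log t / a) ^ 2))) :=
        (ENNReal.le_ofReal_iff_toReal_le (measure_ne_top _ _) (exp_pos _).le).2
          (htail _ (sqrt_pos.2 hlog))
      _ = ENNReal.ofReal (t ^ (-(c / a))) := by
        rw [sq_sqrt hlog.le, rpow_def_of_pos ht0]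
        ring_nf
  have hmeas : AEMeasurable (fun ω ↦ exp (a * (Y ω)⁺ ^ 2)) P :=
    measurable_exp.comp_aemeasurable (((hY.sup_const 0).pow_const 2).const_mul a)
  calc ∫⁻ ω, ENNReal.ofReal (exp (a * (Y ω)⁺ ^ 2)) ∂P
    _ ≤ ENNReal.ofReal (c / a / (c / a - 1)) :=
      lintegral_ofReal_le_of_measure_lt_le_rpow hmeas (ae_of_all _ fun ω ↦ (exp_pos _).le)
        ((one_lt_div ha).2 hac) hexp_tail
    _ = ENNReal.ofReal (c / (c - a)) := by
      rw [div_sub_one ha.ne', div_div_div_cancel_right₀ ha.ne']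

end Moments

section Hoeffding

open ProbabilityTheory

lemma measureReal_sum_integral_sub_ge_le_of_mem_Icc {Ω ι : Type*} [MeasurableSpace Ω]
    {P : Measure Ω} [IsProbabilityMeasure P] {X : ι → Ω → ℝ} {s : Finset ι} {a b : ι → ℝ}
    (hindep : iIndepFun X P) (hX : ∀ i ∈ s, AEMeasurable (X i) P)
    (hab : ∀ i ∈ s, ∀ᵐ ω ∂P, X i ω ∈ Set.Icc (a i) (b i)) {ε : ℝ} (hε : 0 ≤ ε) :
    P.real {ω | ε ≤ ∑ i ∈ s, (∫ ω', X i ω' ∂P - X i ω)} ≤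
      exp (-(2 * ε ^ 2 / ∑ i ∈ s, (b i - a i) ^ 2)) := by
  have hindep_centered : iIndepFun (fun i ω ↦ ∫ ω', X i ω' ∂P - X i ω) P :=
    hindep.comp (fun i x ↦ ∫ ω', X i ω' ∂P - x) fun i ↦ by fun_prop
  have hsub : ∀ i ∈ s, HasSubgaussianMGF (fun ω ↦ ∫ ω', X i ω' ∂P - X i ω)
      ((‖b i - a i‖₊ / 2) ^ 2) P := fun i hi ↦ by
    simpa [Pi.neg_def] using (hasSubgaussianMGF_of_mem_Icc (hX i hi) (hab i hi)).neg
  have hparam : 2 * ∑ i ∈ s, (‖b i - a i‖ / 2) ^ 2 = (∑ i ∈ s, (b i - a i) ^ 2) / 2 := by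
    simp only [div_pow, norm_eq_abs, sq_abs, ← Finset.sum_div]
    ring
  refine (HasSubgaussianMGF.measure_sum_ge_le_of_iIndepFun hindep_centered hsub hε).trans_eq ?_
  push_cast
  rw [hparam, div_div_eq_mul_div, neg_mul, neg_div, mul_comm]

variable {Z : Type*} [MeasurableSpace Z] {𝒟 : Measure Z} [IsProbabilityMeasure 𝒟] {X : Z → ℝ}
  {n : ℕ}

lemma measureReal_integral_sub_sampleMean_ge_le {a b : ℝ} (hX : Measurable X)
    (hab : ∀ z, X z ∈ Set.Icc a b) (hn : n ≠ 0) {ε : ℝ} (hε : 0 ≤ ε) :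
    (Measure.pi fun _ : Fin n ↦ 𝒟).real
        {S | ε ≤ ∫ z, X z ∂𝒟 - (n : ℝ)⁻¹ * ∑ i, X (S i)} ≤
      exp (-(2 * n * ε ^ 2 / (b - a) ^ 2)) := by
  have hn0 : (0 : ℝ) < n := by positivity
  have hmean (i : Fin n) : ∫ S, X (S i) ∂(Measure.pi fun _ : Fin n ↦ 𝒟) = ∫ z, X z ∂𝒟 :=
    integral_comp_eval (μ := fun _ : Fin n ↦ 𝒟) hX.aestronglyMeasurable
  have hoeffding := measureReal_sum_integral_sub_ge_le_of_mem_Icc (s := Finset.univ)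
    (P := Measure.pi fun _ : Fin n ↦ 𝒟) (X := fun i S ↦ X (S i))
    (a := fun _ ↦ a) (b := fun _ ↦ b)
    (iIndepFun_pi fun _ ↦ hX.aemeasurable)
    (fun i _ ↦ (hX.comp (measurable_pi_apply i)).aemeasurable)
    (fun i _ ↦ ae_of_all _ fun S ↦ hab (S i)) (ε := n * ε) (by positivity)
  convert hoeffding using 2
  · ext S
    simp only [hmean, Set.mem_ofPred_eq, Finset.sum_sub_distrib, Finset.sum_const, Finset.card_univ,
      Fintype.card_fin, nsmul_eq_mul]
    rw [← mul_le_mul_iff_right₀ hn0, mul_sub, mul_inv_cancel_left₀ hn0.ne']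
  · rw [Finset.sum_const, Finset.card_univ, Fintype.card_fin, nsmul_eq_mul,
      ← mul_div_mul_left _ _ hn0.ne']
    ring

lemma lintegral_exp_mul_sq_posPart_integral_sub_sampleMean_le (hX : Measurable X)
    (hX01 : ∀ z, X z ∈ Set.Icc (0 : ℝ) 1) (hn : 2 ≤ n) :
    ∫⁻ S, ENNReal.ofReal
        (exp (2 * ((n : ℝ) - 1) * (∫ z, X z ∂𝒟 - (n : ℝ)⁻¹ * ∑ i, X (S i))⁺ ^ 2))
        ∂(Measure.pi fun _ : Fin n ↦ 𝒟) ≤ ENNReal.ofReal n := by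
  have hn2 : (2 : ℝ) ≤ n := by exact_mod_cast hn
  have hmoment := lintegral_exp_mul_sq_posPart_le (P := Measure.pi fun _ : Fin n ↦ 𝒟)
    (Y := fun S ↦ ∫ z, X z ∂𝒟 - (n : ℝ)⁻¹ * ∑ i, X (S i)) (a := 2 * ((n : ℝ) - 1)) (c := 2 * n)
    (Measurable.aemeasurable (by fun_prop)) (by linarith) (by linarith) fun x hx ↦ by
      simpa using measureReal_integral_sub_sampleMean_ge_le hX hX01 (by lia) hx.le
  refine hmoment.trans_eq (congrArg ENNReal.ofReal ?_)
  ring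

end Hoeffding

section Risk

variable {Z Θ : Type*} {n : ℕ}

/-- The population risk `L(θ, 𝒟)` of the hypothesis `θ`: its expected loss on a fresh data point. -/
noncomputable def populationRisk [MeasurableSpace Z] (ℓ : Θ × Z → ℝ) (𝒟 : Measure Z) (θ : Θ) : ℝ :=
  ∫ z, ℓ (θ, z) ∂𝒟

/-- The empirical risk `L̂(θ, S)` of the hypothesis `θ`: its average loss on the sample `S`. -/
noncomputable def empiricalRisk (ℓ : Θ × Z → ℝ) (S : Fin n → Z) (θ : Θ) : ℝ :=
  (n : ℝ)⁻¹ * ∑ i, ℓ (θ, S i)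

/-- The generalization gap `L(θ, 𝒟) - L̂(θ, S)`, positive when the sample flatters `θ`; its average
under the posterior is the quantity that a PAC-Bayesian bound controls. -/
noncomputable def generalizationGap [MeasurableSpace Z] (ℓ : Θ × Z → ℝ) (𝒟 : Measure Z)
    (S : Fin n → Z) (θ : Θ) : ℝ :=
  populationRisk ℓ 𝒟 θ - empiricalRisk ℓ S θ

lemma empiricalRisk_mem_Icc {ℓ : Θ × Z → ℝ} (hℓ01 : ∀ x, ℓ x ∈ Set.Icc (0 : ℝ) 1)
    (S : Fin n → Z) (θ : Θ) : empiricalRisk ℓ S θ ∈ Set.Icc (0 : ℝ) 1 := by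
  have hsum : ∑ i, ℓ (θ, S i) ≤ n := by
    simpa using Finset.sum_le_card_nsmul Finset.univ _ 1 fun i _ ↦ (hℓ01 (θ, S i)).2
  exact ⟨mul_nonneg (by positivity) (Finset.sum_nonneg fun i _ ↦ (hℓ01 _).1),
    inv_mul_le_one_of_le₀ hsum (by positivity)⟩

variable [MeasurableSpace Z] [MeasurableSpace Θ] {ℓ : Θ × Z → ℝ} {𝒟 : Measure Z}

lemma measurable_empiricalRisk (hℓ : Measurable ℓ) :
    Measurable (Function.uncurry (empiricalRisk ℓ : (Fin n → Z) → Θ → ℝ)) := by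
  unfold empiricalRisk Function.uncurry
  fun_prop

lemma measurable_populationRisk [SFinite 𝒟] (hℓ : Measurable ℓ) :
    Measurable (populationRisk ℓ 𝒟) :=
  hℓ.stronglyMeasurable.integral_prod_right'.measurable

lemma measurable_generalizationGap [SFinite 𝒟] (hℓ : Measurable ℓ) :
    Measurable (Function.uncurry (generalizationGap ℓ 𝒟 : (Fin n → Z) → Θ → ℝ)) :=
  ((measurable_populationRisk hℓ).comp measurable_snd).sub (measurable_empiricalRisk hℓ)

lemma memLp_empiricalRisk (hℓ : Measurable ℓ) (hℓ01 : ∀ x, ℓ x ∈ Set.Icc (0 : ℝ) 1)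
    (S : Fin n → Z) (ρ : Measure Θ) [IsFiniteMeasure ρ] (p : ℝ≥0∞) :
    MemLp (empiricalRisk ℓ S) p ρ :=
  memLp_of_bounded (ae_of_all _ (empiricalRisk_mem_Icc hℓ01 S))
    ((measurable_empiricalRisk hℓ).comp measurable_prodMk_left).aestronglyMeasurable p

variable [IsProbabilityMeasure 𝒟]

lemma populationRisk_mem_Icc (hℓ : Measurable ℓ) (hℓ01 : ∀ x, ℓ x ∈ Set.Icc (0 : ℝ) 1)
    (θ : Θ) :
    populationRisk ℓ 𝒟 θ ∈ Set.Icc (0 : ℝ) 1 :=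
  (convex_Icc 0 1).integral_mem isClosed_Icc (ae_of_all _ fun z ↦ hℓ01 (θ, z))
    (Integrable.of_mem_Icc 0 1 (hℓ.comp measurable_prodMk_left).aemeasurable
      (ae_of_all _ fun z ↦ hℓ01 (θ, z)))

lemma memLp_populationRisk (hℓ : Measurable ℓ) (hℓ01 : ∀ x, ℓ x ∈ Set.Icc (0 : ℝ) 1)
    (ρ : Measure Θ) [IsFiniteMeasure ρ] (p : ℝ≥0∞) : MemLp (populationRisk ℓ 𝒟) p ρ :=
  memLp_of_bounded (ae_of_all _ (populationRisk_mem_Icc hℓ hℓ01))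
    (measurable_populationRisk hℓ).aestronglyMeasurable p

lemma memLp_generalizationGap (hℓ : Measurable ℓ) (hℓ01 : ∀ x, ℓ x ∈ Set.Icc (0 : ℝ) 1)
    (S : Fin n → Z) (ρ : Measure Θ) [IsFiniteMeasure ρ] (p : ℝ≥0∞) :
    MemLp (generalizationGap ℓ 𝒟 S) p ρ :=
  (memLp_populationRisk hℓ hℓ01 ρ p).sub (memLp_empiricalRisk hℓ hℓ01 S ρ p)

lemma integral_generalizationGap (hℓ : Measurable ℓ) (hℓ01 : ∀ x, ℓ x ∈ Set.Icc (0 : ℝ) 1)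
    (S : Fin n → Z) (ρ : Measure Θ) [IsFiniteMeasure ρ] :
    ∫ θ, generalizationGap ℓ 𝒟 S θ ∂ρ =
      ∫ θ, populationRisk ℓ 𝒟 θ ∂ρ - ∫ θ, empiricalRisk ℓ S θ ∂ρ :=
  integral_sub ((memLp_populationRisk hℓ hℓ01 ρ 1).integrable le_rfl)
    ((memLp_empiricalRisk hℓ hℓ01 S ρ 1).integrable le_rfl)

end Risk

/-- **McAllester's PAC-Bayesian bound.** With probability at least `1 - δ` over an i.i.d.
sample `S` of size `n` from `𝒟`, simultaneously for all posteriors `ρ`, the `ρ`-average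
population loss is bounded by the `ρ`-average empirical loss plus
`√((KL(ρ‖prior) + log (n/δ)) / (2 (n-1)))` (the bound being read as `+∞` when `KL(ρ‖prior) = +∞`). -/
theorem statement1
    {Z Θ : Type*} [MeasurableSpace Z] [MeasurableSpace Θ]
    (ℓ : Θ × Z → ℝ) (hℓ : Measurable ℓ) (hℓ01 : ∀ x, ℓ x ∈ Set.Icc (0 : ℝ) 1)
    (𝒟 : Measure Z) [IsProbabilityMeasure 𝒟]
    (prior : Measure Θ) [IsProbabilityMeasure prior]
    (n : ℕ) (hn : 2 ≤ n) (δ : ℝ) (hδ : δ ∈ Set.Ioc (0 : ℝ) 1) :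
    ENNReal.ofReal (1 - δ) ≤
      (Measure.pi fun _ : Fin n => 𝒟)
        {S : Fin n → Z |
          ∀ ρ : Measure Θ, IsProbabilityMeasure ρ → klDiv ρ prior ≠ ⊤ →
            ∫ θ, (∫ z, ℓ (θ, z) ∂𝒟) ∂ρ ≤
              (∫ θ, ((n : ℝ)⁻¹ * ∑ i, ℓ (θ, S i)) ∂ρ) +
                Real.sqrt (((klDiv ρ prior).toReal + Real.log (n / δ)) / (2 * ((n : ℝ) - 1)))} := by
  have hn1 : (0 : ℝ) < n - 1 := by
    have : (2 : ℝ) ≤ n := by exact_mod_cast hn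
    linarith
  have hF : Measurable (Function.uncurry fun (S : Fin n → Z) θ ↦
      2 * ((n : ℝ) - 1) * (generalizationGap ℓ 𝒟 S θ)⁺ ^ 2) :=
    (((measurable_generalizationGap hℓ).sup_const 0).pow_const 2).const_mul _
  refine (ofReal_one_sub_le_measure_forall_integral_le_klDiv_add_log hF (by linarith) hδ.1
    (ae_of_all prior fun θ ↦ lintegral_exp_mul_sq_posPart_integral_sub_sampleMean_le
      (hℓ.comp measurable_prodMk_left) (fun z ↦ hℓ01 (θ, z)) hn)).trans
    (measure_mono fun S hS ρ hρ hkl ↦ ?_)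
  have hgap : MemLp (generalizationGap ℓ 𝒟 S) 2 ρ := memLp_generalizationGap hℓ hℓ01 S ρ 2
  have hsq := hS ρ hρ hkl (hgap.pos_part.integrable_sq.const_mul _)
  rw [integral_const_mul, ← le_div_iff₀' (by positivity)] at hsq
  have hle := (integral_le_sqrt_integral_sq_posPart hgap).trans (sqrt_le_sqrt hsq)
  rwa [integral_generalizationGap hℓ hℓ01, sub_le_iff_le_add'] at hle
end

section
/- The problem (P) admits a unique minimizer q* over C₁, and every coordinate of q* is strictly positive: q*_i > 0 for all i ∈ {1, …, N}. -/
/-- The feasible set `C₁`: probability vectors `q` with `q 0 ≥ α * q k` for all `k ≠ 0`.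
(Index `0` plays the role of the index `1` of the paper.) -/
def C1 (N : ℕ) [NeZero N] (α : ℝ) : Set (Fin N → ℝ) :=
  {q | (∀ i, 0 ≤ q i) ∧ (∑ i, q i = 1) ∧ ∀ k, k ≠ 0 → α * q k ≤ q 0}

/-- `KL(q‖p) = ∑ i, q i * log (q i / p i)`, with the convention `0 * log 0 = 0`
(automatic here since `Real.log 0 = 0`). -/
noncomputable def KLv {N : ℕ} (q p : Fin N → ℝ) : ℝ :=
  ∑ i, q i * Real.log (q i / p i)

/-!
The divergence `q ↦ KL(q‖p)` is continuous, strictly convex on the nonnegative orthant and bounded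
below by `∑ i, q i - ∑ i, p i`, so it has exactly one minimizer `q` on a nonempty closed convex
set of nonnegative vectors. The minimizer cannot have a zero coordinate `q j` if some feasible `u`
has `u j > 0`: moving from `q` towards `u` by `t` changes the divergence by at most
`t * (KL(u‖p) - KL(q‖p) + u j * log t)`, which is negative for small `t` because `log t → -∞`.
-/

open Filter Set

section MulLogDiv

variable {c : ℝ}

theorem mul_log_div_eq_sub (hc : c ≠ 0) (x : ℝ) :
    x * Real.log (x / c) = x * Real.log x - x * Real.log c := by
  rcases eq_or_ne x 0 with rfl | hx
  · simp
  · rw [Real.log_div hx hc, mul_sub]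

theorem continuous_mul_log_div (hc : c ≠ 0) : Continuous fun x : ℝ => x * Real.log (x / c) := by
  simp only [mul_log_div_eq_sub hc]
  exact Real.continuous_mul_log.sub (continuous_mul_const _)

theorem strictConvexOn_mul_log_div (hc : c ≠ 0) :
    StrictConvexOn ℝ (Ici 0) fun x : ℝ => x * Real.log (x / c) := by
  simp only [mul_log_div_eq_sub hc]
  exact Real.strictConvexOn_mul_log.sub_concaveOn
    ((LinearMap.mulRight ℝ (Real.log c)).concaveOn (convex_Ici 0))

theorem sub_le_mul_log_div (hc : 0 < c) {x : ℝ} (hx : 0 ≤ x) :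
    x - c ≤ x * Real.log (x / c) := by
  have klFun_scaled : c * InformationTheory.klFun (x / c) = x * Real.log (x / c) - (x - c) := by
    rw [InformationTheory.klFun_apply]
    field_simp
    ring
  have := mul_nonneg hc.le (InformationTheory.klFun_nonneg (div_nonneg hx hc.le))
  linarith

theorem mul_mul_log_div_eq_add {t : ℝ} (ht : t ≠ 0) (hc : c ≠ 0) (x : ℝ) :
    t * x * Real.log (t * x / c) = t * (x * Real.log (x / c)) + t * x * Real.log t := by
  rcases eq_or_ne x 0 with rfl | hx
  · simp
  · rw [mul_div_assoc, Real.log_mul ht (div_ne_zero hx hc)]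
    ring

end MulLogDiv

theorem strictConvexOn_sum_apply {𝕜 ι β : Type*} {E : ι → Type*} [Fintype ι]
    [Semiring 𝕜] [PartialOrder 𝕜] [∀ i, AddCommMonoid (E i)] [∀ i, Module 𝕜 (E i)]
    [AddCommMonoid β] [PartialOrder β] [IsOrderedCancelAddMonoid β] [Module 𝕜 β]
    {s : ∀ i, Set (E i)} {φ : ∀ i, E i → β} (hφ : ∀ i, StrictConvexOn 𝕜 (s i) (φ i)) :
    StrictConvexOn 𝕜 (univ.pi s) fun x => ∑ i, φ i (x i) := by
  refine ⟨convex_pi fun i _ => (hφ i).1, fun x hx y hy hxy a b ha hb hab => ?_⟩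
  obtain ⟨j, hj⟩ := Function.ne_iff.mp hxy
  simp only [Finset.smul_sum, ← Finset.sum_add_distrib]
  refine Finset.sum_lt_sum (fun i _ => ?_) ⟨j, Finset.mem_univ j, ?_⟩
  · exact (hφ i).convexOn.2 (hx i trivial) (hy i trivial) ha.le hb.le hab
  · exact (hφ j).2 (hx j trivial) (hy j trivial) hj ha hb hab

section KLv

variable {N : ℕ} {p : Fin N → ℝ}

theorem continuous_KLv (hp : ∀ i, p i ≠ 0) : Continuous fun q => KLv q p :=
  continuous_finsetSum _ fun i _ => (continuous_mul_log_div (hp i)).comp (continuous_apply i)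

theorem strictConvexOn_KLv (hp : ∀ i, p i ≠ 0) :
    StrictConvexOn ℝ (Ici 0) fun q => KLv q p := by
  have hsum := strictConvexOn_sum_apply fun i => strictConvexOn_mul_log_div (hp i)
  rwa [pi_univ_Ici] at hsum

theorem sum_sub_sum_le_KLv (hp : ∀ i, 0 < p i) {q : Fin N → ℝ} (hq : 0 ≤ q) :
    ∑ i, q i - ∑ i, p i ≤ KLv q p := by
  rw [← Finset.sum_sub_distrib]
  exact Finset.sum_le_sum fun i _ => sub_le_mul_log_div (hp i) (hq i)

theorem mem_Icc_of_KLv_le (hp : ∀ i, 0 < p i) {q : Fin N → ℝ} (hq : 0 ≤ q) {M : ℝ}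
    (hM : KLv q p ≤ M) : q ∈ Icc 0 fun _ => M + ∑ i, p i := by
  refine ⟨hq, fun i => ?_⟩
  have hle : q i ≤ ∑ i, q i := Finset.single_le_sum (fun i _ => hq i) (Finset.mem_univ i)
  linarith [sum_sub_sum_le_KLv hp hq]

theorem exists_isMinOn_KLv (hp : ∀ i, 0 < p i) {K : Set (Fin N → ℝ)} (hK : IsClosed K)
    (hK0 : K ⊆ Ici 0) (hne : K.Nonempty) : ∃ q ∈ K, IsMinOn (fun q => KLv q p) K q := by
  obtain ⟨u, hu⟩ := hne
  refine (continuous_KLv fun i => (hp i).ne').continuousOn.exists_isMinOn' hK hu ?_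
  rw [eventually_inf_principal]
  filter_upwards [isCompact_Icc.compl_mem_cocompact] with q hfar hqK
  by_contra! hlt
  exact hfar (mem_Icc_of_KLv_le hp (hK0 hqK) hlt.le)

theorem KLv_segment_le (hp : ∀ i, p i ≠ 0) {q u : Fin N → ℝ} (hq : 0 ≤ q) (hu : 0 ≤ u)
    {j : Fin N} (hqj : q j = 0) {t : ℝ} (ht0 : 0 < t) (ht1 : t ≤ 1) :
    KLv ((1 - t) • q + t • u) p ≤ (1 - t) * KLv q p + t * KLv u p + t * u j * Real.log t := by
  have hterm (i : Fin N) : ((1 - t) • q + t • u) i * Real.log (((1 - t) • q + t • u) i / p i) ≤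
      (1 - t) * (q i * Real.log (q i / p i)) + t * (u i * Real.log (u i / p i)) +
        (Pi.single j (t * u j * Real.log t) : Fin N → ℝ) i := by
    simp only [Pi.add_apply, Pi.smul_apply, smul_eq_mul]
    rcases eq_or_ne i j with rfl | hij
    · simp only [hqj, mul_zero, zero_mul, zero_add, Pi.single_eq_same]
      exact (mul_mul_log_div_eq_add ht0.ne' (hp i) (u i)).le
    · rw [Pi.single_eq_of_ne hij, add_zero]
      exact (strictConvexOn_mul_log_div (hp i)).convexOn.2 (hq i) (hu i) (sub_nonneg.2 ht1) ht0.le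
        (sub_add_cancel 1 t)
  calc KLv ((1 - t) • q + t • u) p
      ≤ ∑ i, ((1 - t) * (q i * Real.log (q i / p i)) + t * (u i * Real.log (u i / p i)) +
          (Pi.single j (t * u j * Real.log t) : Fin N → ℝ) i) :=
        Finset.sum_le_sum fun i _ => hterm i
    _ = (1 - t) * KLv q p + t * KLv u p + t * u j * Real.log t := by
        simp only [KLv, Finset.sum_add_distrib, ← Finset.mul_sum, Fintype.sum_pi_single']

theorem apply_pos_of_isMinOn_KLv (hp : ∀ i, p i ≠ 0) {K : Set (Fin N → ℝ)} (hK : Convex ℝ K)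
    (hK0 : K ⊆ Ici 0) {q u : Fin N → ℝ} (hq : q ∈ K) (hmin : IsMinOn (fun q => KLv q p) K q)
    (hu : u ∈ K) {j : Fin N} (huj : 0 < u j) : 0 < q j := by
  refine (hK0 hq j).lt_of_ne' fun hqj => ?_
  obtain ⟨t, hlog, ht0, ht1⟩ :
      ∃ t, Real.log t < (KLv q p - KLv u p) / u j ∧ t ∈ Ioo (0 : ℝ) 1 :=
    ((Real.tendsto_log_nhdsGT_zero.eventually_lt_atBot _).and
      (Ioo_mem_nhdsGT one_pos)).exists
  have hdecrease : t * (u j * Real.log t) < t * (KLv q p - KLv u p) :=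
    mul_lt_mul_of_pos_left ((lt_div_iff₀' huj).1 hlog) ht0
  have hsegment := KLv_segment_le hp (hK0 hq) (hK0 hu) hqj ht0 ht1.le
  have hoptimal : KLv q p ≤ KLv ((1 - t) • q + t • u) p :=
    hmin (hK hq hu (sub_nonneg.2 ht1.le) ht0.le (sub_add_cancel 1 t))
  linarith

end KLv

section C1

variable (N : ℕ) [NeZero N] (α : ℝ)

theorem C1_eq_stdSimplex_inter :
    C1 N α = stdSimplex ℝ (Fin N) ∩ ⋂ k ≠ 0, {q | α * q k ≤ q 0} := by
  ext q
  simp only [C1, stdSimplex, mem_inter_iff, mem_iInter, mem_ofPred_eq, and_assoc]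

theorem isClosed_C1 : IsClosed (C1 N α) := by
  rw [C1_eq_stdSimplex_inter]
  exact (isClosed_stdSimplex ℝ (Fin N)).inter <| isClosed_biInter fun k _ =>
    isClosed_le (by fun_prop) (by fun_prop)

theorem convex_C1 : Convex ℝ (C1 N α) := by
  rw [C1_eq_stdSimplex_inter]
  refine (convex_stdSimplex ℝ (Fin N)).inter <| convex_iInter₂ fun k _ => ?_
  have hhalfSpace : {q : Fin N → ℝ | α * q k ≤ q 0} =
      {q | (α • LinearMap.proj k - LinearMap.proj 0 : (Fin N → ℝ) →ₗ[ℝ] ℝ) q ≤ 0} := by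
    ext q
    simp
  rw [hhalfSpace]
  exact convex_halfSpace_le (LinearMap.isLinear _) 0

theorem C1_subset_Ici_zero : C1 N α ⊆ Ici 0 := fun _ hq => hq.1

theorem exists_pos_mem_C1 : ∃ u ∈ C1 N α, ∀ i, 0 < u i := by
  let w : Fin N → ℝ := Function.update 1 0 (max α 1)
  have hw (i : Fin N) : 0 < w i := by
    rcases eq_or_ne i 0 with rfl | hi
    · simp [w]
    · simp [w, hi]
  have hsum : 0 < ∑ i, w i := Finset.sum_pos (fun i _ => hw i) Finset.univ_nonempty
  refine ⟨fun i => w i / ∑ i, w i, ⟨fun i => (div_pos (hw i) hsum).le, ?_, fun k hk => ?_⟩,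
    fun i => div_pos (hw i) hsum⟩
  · rw [← Finset.sum_div, div_self hsum.ne']
  · have hratio : α * w k ≤ w 0 := by simp [w, hk]
    calc α * (w k / ∑ i, w i) = α * w k / ∑ i, w i := (mul_div_assoc _ _ _).symm
      _ ≤ w 0 / ∑ i, w i := by gcongr

end C1

theorem statement3_general {N : ℕ} {p : Fin N → ℝ} (hp : ∀ i, 0 < p i) {K : Set (Fin N → ℝ)}
    (hclosed : IsClosed K) (hconvex : Convex ℝ K) (hK0 : K ⊆ Ici 0)
    (hpos : ∃ u ∈ K, ∀ i, 0 < u i) :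
    ∃ q : Fin N → ℝ,
      (q ∈ K ∧ ∀ r ∈ K, KLv q p ≤ KLv r p) ∧
      (∀ i, 0 < q i) ∧
      (∀ r, r ∈ K → (∀ s ∈ K, KLv r p ≤ KLv s p) → r = q) := by
  have hp0 (i : Fin N) : p i ≠ 0 := (hp i).ne'
  obtain ⟨u, hu, hupos⟩ := hpos
  obtain ⟨q, hq, hmin⟩ := exists_isMinOn_KLv hp hclosed hK0 ⟨u, hu⟩
  refine ⟨q, ⟨hq, fun r hr => hmin hr⟩, fun j => ?_, fun r hr hrmin => ?_⟩
  · exact apply_pos_of_isMinOn_KLv hp0 hconvex hK0 hq hmin hu (hupos j)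
  · exact ((strictConvexOn_KLv hp0).subset hK0 hconvex).eq_of_isMinOn hrmin hmin hr hq

/-- Problem (P) admits a unique minimizer over `C₁`, and all of its coordinates are
strictly positive. -/
theorem statement3 (N : ℕ) [NeZero N] (hN : 2 ≤ N) (α : ℝ) (hα : 1 ≤ α)
    (p : Fin N → ℝ) (hp : ∀ i, 0 < p i) (hps : ∑ i, p i = 1) :
    ∃ q : Fin N → ℝ,
      (q ∈ C1 N α ∧ ∀ r ∈ C1 N α, KLv q p ≤ KLv r p) ∧
      (∀ i, 0 < q i) ∧
      (∀ r, r ∈ C1 N α → (∀ s ∈ C1 N α, KLv r p ≤ KLv s p) → r = q) :=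
  statement3_general hp (isClosed_C1 N α) (convex_C1 N α) (C1_subset_Ici_zero N α)
    (exists_pos_mem_C1 N α)
end

section
/- If j ∈ {2, …, N} satisfies p_1 ≥ α·p_j, then the KKT multiplier μ_j equals 0, i.e., j ∉ A. In particular, A ⊆ B where B = {j ∈ {2, …, N} : α·p_j > p_1}. -/
/-- `g(S) = (p 0 ^ α * ∏_{j ∈ S} α * p j) ^ (1 / (|S| + α))`. -/
noncomputable def gfun {N : ℕ} [NeZero N] (α : ℝ) (p : Fin N → ℝ) (S : Finset (Fin N)) : ℝ :=
  (p 0 ^ α * ∏ j ∈ S, α * p j) ^ ((1 : ℝ) / ((S.card : ℝ) + α))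

section KKT

open Finset Real

variable {ι : Type*} [Fintype ι] [DecidableEq ι] {i₀ j : ι} {α l : ℝ} {p q μ : ι → ℝ}

/-- Karush–Kuhn–Tucker conditions for minimizing `∑ i, q i * log (q i / p i)` over the `q` with
`∑ i, q i = 1` and `α * q j ≤ q i₀` for all `j ≠ i₀`: here `l` is the multiplier of the
normalization and `μ j` that of the `j`-th inequality, so the value `μ i₀` is irrelevant. The
constraints `0 ≤ q j`, inactive at a positive `q`, carry no multiplier, and primal feasibility of
`q` is not part of the conditions. -/
structure IsKKTMultiplier (i₀ : ι) (α : ℝ) (p q : ι → ℝ) (l : ℝ) (μ : ι → ℝ) : Prop where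
  nonneg : ∀ j, j ≠ i₀ → 0 ≤ μ j
  stationary_base : q i₀ = p i₀ * exp ((∑ k ∈ univ.erase i₀, μ k) - 1 - l)
  stationary : ∀ j, j ≠ i₀ → q j = p j * exp (-(α * μ j) - 1 - l)
  slackness : ∀ j, j ≠ i₀ → μ j * (α * q j - q i₀) = 0

namespace IsKKTMultiplier

lemma sum_multiplier_nonneg (h : IsKKTMultiplier i₀ α p q l μ) : 0 ≤ ∑ k ∈ univ.erase i₀, μ k :=
  sum_nonneg fun k hk ↦ h.nonneg k (ne_of_mem_erase hk)

lemma mul_eq_of_multiplier_ne_zero (h : IsKKTMultiplier i₀ α p q l μ) (hj : j ≠ i₀) (hμ : μ j ≠ 0) :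
    α * q j = q i₀ :=
  sub_eq_zero.mp ((mul_eq_zero.mp (h.slackness j hj)).resolve_left hμ)

-- Substituting stationarity into the tight constraint eliminates both `q` and `l`.
lemma mul_eq_mul_exp_of_multiplier_ne_zero (h : IsKKTMultiplier i₀ α p q l μ) (hj : j ≠ i₀)
    (hμ : μ j ≠ 0) :
    α * p j = p i₀ * exp ((∑ k ∈ univ.erase i₀, μ k) + α * μ j) := by
  have hcancel : exp (-(α * μ j) - 1 - l) * exp (α * μ j + 1 + l) = 1 := by
    rw [← exp_add, ← exp_zero]
    ring_nf
  calc α * p j = α * q j * exp (α * μ j + 1 + l) := by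
        rw [h.stationary j hj, mul_assoc, mul_assoc, hcancel, mul_one]
    _ = q i₀ * exp (α * μ j + 1 + l) := by rw [h.mul_eq_of_multiplier_ne_zero hj hμ]
    _ = p i₀ * exp ((∑ k ∈ univ.erase i₀, μ k) + α * μ j) := by
        rw [h.stationary_base, mul_assoc, ← exp_add]
        ring_nf

lemma lt_mul_of_multiplier_pos (h : IsKKTMultiplier i₀ α p q l μ) (hp₀ : 0 < p i₀) (hpj : 0 ≤ p j)
    (hj : j ≠ i₀) (hμ : 0 < μ j) : p i₀ < α * p j := by
  have hident := h.mul_eq_mul_exp_of_multiplier_ne_zero hj hμ.ne'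
  have hα : 0 < α := pos_of_mul_pos_left (hident ▸ mul_pos hp₀ (exp_pos _)) hpj
  rw [hident]
  exact lt_mul_of_one_lt_right hp₀
    (one_lt_exp_iff.mpr (add_pos_of_nonneg_of_pos h.sum_multiplier_nonneg (mul_pos hα hμ)))

lemma multiplier_eq_zero_of_mul_le (h : IsKKTMultiplier i₀ α p q l μ) (hp₀ : 0 < p i₀)
    (hpj : 0 ≤ p j) (hj : j ≠ i₀) (hle : α * p j ≤ p i₀) : μ j = 0 :=
  ((h.nonneg j hj).eq_or_lt.resolve_right fun hμ ↦
    (h.lt_mul_of_multiplier_pos hp₀ hpj hj hμ).not_ge hle).symm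

end IsKKTMultiplier

theorem statement6_general (hp₀ : 0 < p i₀) (hp : ∀ i, 0 ≤ p i)
    (h : IsKKTMultiplier i₀ α p q l μ) :
    (∀ j, j ≠ i₀ → α * p j ≤ p i₀ → μ j = 0) ∧
    univ.filter (fun j ↦ j ≠ i₀ ∧ 0 < μ j) ⊆ univ.filter (fun j ↦ j ≠ i₀ ∧ p i₀ < α * p j) :=
  ⟨fun j hj hle ↦ h.multiplier_eq_zero_of_mul_le hp₀ (hp j) hj hle,
    monotone_filter_right _ fun j _ ⟨hj, hμ⟩ ↦ ⟨hj, h.lt_mul_of_multiplier_pos hp₀ (hp j) hj hμ⟩⟩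

end KKT

/-- If `j ≠ 0` satisfies `p 0 ≥ α * p j`, then the KKT multiplier `μ j` is zero, i.e.
`j ∉ A`. In particular `A ⊆ B` where `B = {j ≠ 0 : α * p j > p 0}`. -/
theorem statement6 (N : ℕ) [NeZero N] (hN : 2 ≤ N) (α : ℝ) (hα : 1 ≤ α)
    (p : Fin N → ℝ) (hp : ∀ i, 0 < p i) (hps : ∑ i, p i = 1)
    (q : Fin N → ℝ) (hqC : q ∈ C1 N α)
    (hqmin : ∀ r ∈ C1 N α, KLv q p ≤ KLv r p)
    (hquniq : ∀ r, r ∈ C1 N α → (∀ s ∈ C1 N α, KLv r p ≤ KLv s p) → r = q)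
    (hqpos : ∀ i, 0 < q i)
    (l : ℝ) (μ : Fin N → ℝ) (hμnn : ∀ j, j ≠ 0 → 0 ≤ μ j)
    (hstat0 : q 0 = p 0 * Real.exp ((∑ k ∈ Finset.univ.erase 0, μ k) - 1 - l))
    (hstatj : ∀ j, j ≠ 0 → q j = p j * Real.exp (-(α * μ j) - 1 - l))
    (hslack : ∀ j, j ≠ 0 → μ j * (α * q j - q 0) = 0) :
    (∀ j, j ≠ 0 → α * p j ≤ p 0 → μ j = 0) ∧
    Finset.univ.filter (fun j : Fin N => j ≠ 0 ∧ 0 < μ j) ⊆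
      Finset.univ.filter (fun j : Fin N => j ≠ 0 ∧ p 0 < α * p j) :=
  statement6_general (hp 0) (fun i ↦ (hp i).le) ⟨hμnn, hstat0, hstatj, hslack⟩
end

section
/- The unique minimizer q* of (P) satisfies: q*_1 = exp(−1−λ)·g(A); q*_j = q*_1/α for every j ∈ A; q*_j = p_j·exp(−1−λ) for every j ∈ {2, …, N} \ A; and exp(∑_{k∈A} μ_k) = (p_1^{−|A|} · ∏_{j∈A} α·p_j)^{1/(|A| + α)}. -/
/-!
For an active index `j`, complementary slackness says `α * q j = q i₀`, where `i₀` is the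
distinguished index, and the two stationarity equations turn this into
`α * p j = p i₀ * exp (M + α * μ j)` with `M = ∑ k ∈ A, μ k`. Multiplying over `A`, the individual
multipliers recombine into `M`, so that `∏ j ∈ A, α * p j = p i₀ ^ |A| * exp (M * (|A| + α))` can
be solved for `exp M`.
-/

section

open Finset

/-- `IsLagrangeMultiplier i₀ α p q l μ` says that `l` and `μ` are Lagrange multipliers at `q` for
minimizing `∑ i, q i * log (q i / p i)` subject to `∑ i, q i = 1` (multiplier `l`) and
`α * q j ≤ q i₀` for `j ≠ i₀` (multipliers `μ j`). The stationarity equations are solved for `q`,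
the value `μ i₀` is irrelevant, and feasibility of `q` is not part of the notion. -/
structure IsLagrangeMultiplier {ι : Type*} [Fintype ι] [DecidableEq ι] (i₀ : ι) (α : ℝ)
    (p q : ι → ℝ) (l : ℝ) (μ : ι → ℝ) : Prop where
  nonneg : ∀ j, j ≠ i₀ → 0 ≤ μ j
  stationary_base : q i₀ = p i₀ * Real.exp ((∑ k ∈ univ.erase i₀, μ k) - 1 - l)
  stationary_of_ne : ∀ j, j ≠ i₀ → q j = p j * Real.exp (-(α * μ j) - 1 - l)
  slackness : ∀ j, j ≠ i₀ → μ j * (α * q j - q i₀) = 0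

/-- The active set of the multipliers `μ`: the indices other than the distinguished index `i₀`
whose multiplier is positive. -/
noncomputable def activeSet {ι : Type*} [Fintype ι] [DecidableEq ι] (i₀ : ι) (μ : ι → ℝ) :
    Finset ι :=
  univ.filter fun j ↦ j ≠ i₀ ∧ 0 < μ j

variable {ι : Type*} [Fintype ι] [DecidableEq ι] {i₀ j : ι} {α l : ℝ} {p q μ : ι → ℝ}

theorem mem_activeSet : j ∈ activeSet i₀ μ ↔ j ≠ i₀ ∧ 0 < μ j := by
  simp only [activeSet, mem_filter_univ]

namespace IsLagrangeMultiplier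

theorem eq_zero_of_notMem_activeSet (h : IsLagrangeMultiplier i₀ α p q l μ) (hj : j ≠ i₀)
    (hjA : j ∉ activeSet i₀ μ) : μ j = 0 :=
  le_antisymm (not_lt.mp fun hpos ↦ hjA (mem_activeSet.mpr ⟨hj, hpos⟩)) (h.nonneg j hj)

theorem sum_activeSet (h : IsLagrangeMultiplier i₀ α p q l μ) :
    ∑ k ∈ activeSet i₀ μ, μ k = ∑ k ∈ univ.erase i₀, μ k :=
  sum_subset (fun _ hk ↦ mem_erase.mpr ⟨(mem_activeSet.mp hk).1, mem_univ _⟩)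
    fun _ hk hkA ↦ h.eq_zero_of_notMem_activeSet (ne_of_mem_erase hk) hkA

theorem base_eq (h : IsLagrangeMultiplier i₀ α p q l μ) :
    q i₀ = Real.exp (-1 - l) * (p i₀ * Real.exp (∑ k ∈ activeSet i₀ μ, μ k)) := by
  rw [h.stationary_base, ← h.sum_activeSet, mul_left_comm, ← Real.exp_add]
  ring_nf

theorem eq_of_notMem_activeSet (h : IsLagrangeMultiplier i₀ α p q l μ) (hj : j ≠ i₀)
    (hjA : j ∉ activeSet i₀ μ) : q j = p j * Real.exp (-1 - l) := by
  rw [h.stationary_of_ne j hj, h.eq_zero_of_notMem_activeSet hj hjA, mul_zero, neg_zero, zero_sub]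

theorem mul_eq_base_of_mem_activeSet (h : IsLagrangeMultiplier i₀ α p q l μ)
    (hj : j ∈ activeSet i₀ μ) : α * q j = q i₀ :=
  have ⟨hne, hpos⟩ := mem_activeSet.mp hj
  sub_eq_zero.mp ((mul_eq_zero.mp (h.slackness j hne)).resolve_left hpos.ne')

theorem eq_base_div_of_mem_activeSet (h : IsLagrangeMultiplier i₀ α p q l μ) (hp : p i₀ ≠ 0)
    (hj : j ∈ activeSet i₀ μ) : q j = q i₀ / α := by
  have hactive := h.mul_eq_base_of_mem_activeSet hj
  have hbase : q i₀ ≠ 0 := by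
    rw [h.stationary_base]
    exact mul_ne_zero hp (Real.exp_ne_zero _)
  have hα : α ≠ 0 := left_ne_zero_of_mul (hactive ▸ hbase)
  exact eq_div_of_mul_eq hα (by rw [mul_comm, hactive])

theorem mul_eq_mul_exp_of_mem_activeSet (h : IsLagrangeMultiplier i₀ α p q l μ)
    (hj : j ∈ activeSet i₀ μ) :
    α * p j = p i₀ * Real.exp ((∑ k ∈ activeSet i₀ μ, μ k) + α * μ j) := by
  apply mul_right_cancel₀ (Real.exp_ne_zero (-(α * μ j) - 1 - l))
  calc α * p j * Real.exp (-(α * μ j) - 1 - l)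
    _ = α * q j := by rw [h.stationary_of_ne j (mem_activeSet.mp hj).1, mul_assoc]
    _ = p i₀ * Real.exp ((∑ k ∈ activeSet i₀ μ, μ k) - 1 - l) := by
      rw [h.mul_eq_base_of_mem_activeSet hj, h.stationary_base, h.sum_activeSet]
    _ = p i₀ * Real.exp ((∑ k ∈ activeSet i₀ μ, μ k) + α * μ j) *
          Real.exp (-(α * μ j) - 1 - l) := by
      rw [mul_assoc, ← Real.exp_add]
      ring_nf

theorem prod_activeSet (h : IsLagrangeMultiplier i₀ α p q l μ) :
    ∏ j ∈ activeSet i₀ μ, α * p j =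
      p i₀ ^ #(activeSet i₀ μ) *
        Real.exp ((∑ k ∈ activeSet i₀ μ, μ k) * (#(activeSet i₀ μ) + α)) := by
  rw [prod_congr rfl fun j hj ↦ h.mul_eq_mul_exp_of_mem_activeSet hj, prod_mul_distrib,
    prod_const, ← Real.exp_sum, sum_add_distrib, sum_const, nsmul_eq_mul, ← mul_sum]
  ring_nf

theorem rpow_mul_prod_activeSet_rpow (h : IsLagrangeMultiplier i₀ α p q l μ) (hp : 0 < p i₀)
    (hα : (#(activeSet i₀ μ) : ℝ) + α ≠ 0) (β : ℝ) :
    (p i₀ ^ β * ∏ j ∈ activeSet i₀ μ, α * p j) ^ ((1 : ℝ) / (#(activeSet i₀ μ) + α)) =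
      p i₀ ^ ((β + #(activeSet i₀ μ)) / (#(activeSet i₀ μ) + α)) *
        Real.exp (∑ k ∈ activeSet i₀ μ, μ k) := by
  rw [h.prod_activeSet, ← mul_assoc, ← Real.rpow_add_natCast hp.ne',
    Real.mul_rpow (Real.rpow_nonneg hp.le _) (Real.exp_nonneg _), ← Real.rpow_mul hp.le,
    ← Real.exp_mul, mul_one_div, mul_assoc, mul_one_div_cancel hα, mul_one]

end IsLagrangeMultiplier

theorem statement7_general (h : IsLagrangeMultiplier i₀ α p q l μ) (hp : 0 < p i₀)
    (hα : (#(activeSet i₀ μ) : ℝ) + α ≠ 0) :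
    q i₀ = Real.exp (-1 - l) *
      (p i₀ ^ α * ∏ j ∈ activeSet i₀ μ, α * p j) ^ ((1 : ℝ) / (#(activeSet i₀ μ) + α)) ∧
    (∀ j ∈ activeSet i₀ μ, q j = q i₀ / α) ∧
    (∀ j, j ≠ i₀ → j ∉ activeSet i₀ μ → q j = p j * Real.exp (-1 - l)) ∧
    Real.exp (∑ k ∈ activeSet i₀ μ, μ k) =
      (p i₀ ^ (-(#(activeSet i₀ μ) : ℝ)) * ∏ j ∈ activeSet i₀ μ, α * p j) ^
        ((1 : ℝ) / (#(activeSet i₀ μ) + α)) := by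
  refine ⟨?_, fun j hj ↦ h.eq_base_div_of_mem_activeSet hp.ne' hj,
    fun j hj hjA ↦ h.eq_of_notMem_activeSet hj hjA, ?_⟩
  · rw [h.rpow_mul_prod_activeSet_rpow hp hα, add_comm α, div_self hα, Real.rpow_one, ← h.base_eq]
  · rw [h.rpow_mul_prod_activeSet_rpow hp hα, neg_add_cancel, zero_div, Real.rpow_zero, one_mul]

end

/-- Closed form of the minimizer in terms of the active set
`A = {j ≠ 0 : μ j > 0}`: `q* 0 = exp (-1-λ) * g A`, `q* j = q* 0 / α` on `A`,
`q* j = p j * exp (-1-λ)` off `A`, and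
`exp (∑_{k ∈ A} μ k) = (p 0 ^ (-|A|) * ∏_{j ∈ A} α * p j) ^ (1/(|A| + α))`. -/
theorem statement7 (N : ℕ) [NeZero N] (hN : 2 ≤ N) (α : ℝ) (hα : 1 ≤ α)
    (p : Fin N → ℝ) (hp : ∀ i, 0 < p i) (hps : ∑ i, p i = 1)
    (q : Fin N → ℝ) (hqC : q ∈ C1 N α)
    (hqmin : ∀ r ∈ C1 N α, KLv q p ≤ KLv r p)
    (hquniq : ∀ r, r ∈ C1 N α → (∀ s ∈ C1 N α, KLv r p ≤ KLv s p) → r = q)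
    (hqpos : ∀ i, 0 < q i)
    (l : ℝ) (μ : Fin N → ℝ) (hμnn : ∀ j, j ≠ 0 → 0 ≤ μ j)
    (hstat0 : q 0 = p 0 * Real.exp ((∑ k ∈ Finset.univ.erase 0, μ k) - 1 - l))
    (hstatj : ∀ j, j ≠ 0 → q j = p j * Real.exp (-(α * μ j) - 1 - l))
    (hslack : ∀ j, j ≠ 0 → μ j * (α * q j - q 0) = 0)
    (A : Finset (Fin N)) (hA : A = Finset.univ.filter (fun j : Fin N => j ≠ 0 ∧ 0 < μ j)) :
    q 0 = Real.exp (-1 - l) * gfun α p A ∧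
    (∀ j ∈ A, q j = q 0 / α) ∧
    (∀ j, j ≠ 0 → j ∉ A → q j = p j * Real.exp (-1 - l)) ∧
    Real.exp (∑ k ∈ A, μ k) =
      (p 0 ^ (-(A.card : ℝ)) * ∏ j ∈ A, α * p j) ^ ((1 : ℝ) / ((A.card : ℝ) + α)) := by
  subst hA
  exact statement7_general ⟨hμnn, hstat0, hstatj, hslack⟩ (hp 0) (by positivity)
end

section
/- If B ≠ ∅, then the index j_1 corresponding to the largest element of B belongs to the active set: j_1 ∈ A, i.e., μ_{j_1} > 0; in particular the constraint is active at the minimizer, q*_1 = α·q*_{j_1}. -/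
/-!
If every multiplier vanished, `q` would be proportional to `p`, and then an index `j` with
`p 0 < α * p j` would violate the constraint `α * q j ≤ q 0`; so some constraint `k` is active.
All active constraints share the value `α * q k = q 0`, which no other `α * q j` exceeds, so a
larger weight `p j` has to be damped by a larger multiplier. The largest weight is therefore
active as well.
-/

section KKT

variable {ι : Type*} [Fintype ι] [DecidableEq ι] {i₀ j k : ι} {α l : ℝ} {p q μ : ι → ℝ}

/-- The KKT system of minimizing `KL(q‖p)` over vectors `q` of fixed total mass subject to
`α * q k ≤ q i₀` for all `k ≠ i₀`. The mass of `q` is not prescribed: its multiplier `l` only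
rescales `q`. The value `μ i₀` is unconstrained. -/
structure IsKKTPoint (i₀ : ι) (α : ℝ) (p q μ : ι → ℝ) (l : ℝ) : Prop where
  mul_le : ∀ k, k ≠ i₀ → α * q k ≤ q i₀
  multiplier_nonneg : ∀ k, k ≠ i₀ → 0 ≤ μ k
  base_eq : q i₀ = p i₀ * Real.exp ((∑ k ∈ Finset.univ.erase i₀, μ k) - 1 - l)
  eq_of_ne : ∀ k, k ≠ i₀ → q k = p k * Real.exp (-(α * μ k) - 1 - l)
  slackness : ∀ k, k ≠ i₀ → μ k * (α * q k - q i₀) = 0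

namespace IsKKTPoint

theorem base_eq_mul_of_multiplier_ne_zero (h : IsKKTPoint i₀ α p q μ l) (hk : k ≠ i₀)
    (hμk : μ k ≠ 0) : q i₀ = α * q k :=
  (sub_eq_zero.mp ((mul_eq_zero.mp (h.slackness k hk)).resolve_left hμk)).symm

theorem exists_multiplier_pos (h : IsKKTPoint i₀ α p q μ l) (hj : j ≠ i₀)
    (hpj : p i₀ < α * p j) : ∃ k, k ≠ i₀ ∧ 0 < μ k := by
  by_contra! hμ_nonpos
  have hμ : ∀ k, k ≠ i₀ → μ k = 0 := fun k hk ↦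
    le_antisymm (hμ_nonpos k hk) (h.multiplier_nonneg k hk)
  have hsum : ∑ k ∈ Finset.univ.erase i₀, μ k = 0 :=
    Finset.sum_eq_zero fun k hk ↦ hμ k (Finset.ne_of_mem_erase hk)
  have hq₀ : q i₀ = p i₀ * Real.exp (0 - 1 - l) := by rw [h.base_eq, hsum]
  have hqj : q j = p j * Real.exp (0 - 1 - l) := by
    rw [h.eq_of_ne j hj, hμ j hj, mul_zero, neg_zero]
  refine (h.mul_le j hj).not_gt ?_
  calc q i₀ = p i₀ * Real.exp (0 - 1 - l) := hq₀
    _ < α * p j * Real.exp (0 - 1 - l) := mul_lt_mul_of_pos_right hpj (Real.exp_pos _)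
    _ = α * q j := by rw [hqj, mul_assoc]

theorem multiplier_le_multiplier (h : IsKKTPoint i₀ α p q μ l) (hα : 0 < α) (hk : k ≠ i₀)
    (hj : j ≠ i₀) (hpj : 0 < p j) (hkj : p k ≤ p j) : μ k ≤ μ j := by
  obtain hμk | hμk := eq_or_ne (μ k) 0
  · exact hμk.le.trans (h.multiplier_nonneg j hj)
  have hqle : q j ≤ q k := le_of_mul_le_mul_left
    ((h.mul_le j hj).trans_eq (h.base_eq_mul_of_multiplier_ne_zero hk hμk)) hα
  have hexp : p j * Real.exp (-(α * μ j) - 1 - l) ≤ p j * Real.exp (-(α * μ k) - 1 - l) :=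
    calc p j * Real.exp (-(α * μ j) - 1 - l) = q j := (h.eq_of_ne j hj).symm
      _ ≤ q k := hqle
      _ = p k * Real.exp (-(α * μ k) - 1 - l) := h.eq_of_ne k hk
      _ ≤ p j * Real.exp (-(α * μ k) - 1 - l) := by gcongr
  have hexponent := Real.exp_le_exp.mp (le_of_mul_le_mul_left hexp hpj)
  exact le_of_mul_le_mul_left (by linarith) hα

end IsKKTPoint

theorem statement9_general (hp : ∀ i, 0 < p i) (h : IsKKTPoint i₀ α p q μ l) (hj : j ≠ i₀)
    (hpj : p i₀ < α * p j) (hmax : ∀ k, k ≠ i₀ → p i₀ < α * p k → p k ≤ p j) :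
    0 < μ j ∧ q i₀ = α * q j := by
  have hα : 0 < α := pos_of_mul_pos_left ((hp i₀).trans hpj) (hp j).le
  obtain ⟨k, hk, hμk⟩ := h.exists_multiplier_pos hj hpj
  have hkj : p k ≤ p j := by
    obtain hpk | hpk := lt_or_ge (p i₀) (α * p k)
    · exact hmax k hk hpk
    · exact le_of_mul_le_mul_left (hpk.trans hpj.le) hα
  have hμj : 0 < μ j := hμk.trans_le (h.multiplier_le_multiplier hα hk hj (hp j) hkj)
  exact ⟨hμj, h.base_eq_mul_of_multiplier_ne_zero hj hμj.ne'⟩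

end KKT

/-- If `B = {j ≠ 0 : α * p j > p 0}` is nonempty, then any index of `B` attaining the
largest value of `p` over `B` (i.e. the index `j₁` of the paper's enumeration) belongs to
the active set: `μ j₁ > 0`; in particular the corresponding constraint is active at the
minimizer, `q* 0 = α * q* j₁`. -/
theorem statement9 (N : ℕ) [NeZero N] (hN : 2 ≤ N) (α : ℝ) (hα : 1 ≤ α)
    (p : Fin N → ℝ) (hp : ∀ i, 0 < p i) (hps : ∑ i, p i = 1)
    (q : Fin N → ℝ) (hqC : q ∈ C1 N α)
    (hqmin : ∀ r ∈ C1 N α, KLv q p ≤ KLv r p)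
    (hquniq : ∀ r, r ∈ C1 N α → (∀ s ∈ C1 N α, KLv r p ≤ KLv s p) → r = q)
    (hqpos : ∀ i, 0 < q i)
    (l : ℝ) (μ : Fin N → ℝ) (hμnn : ∀ j, j ≠ 0 → 0 ≤ μ j)
    (hstat0 : q 0 = p 0 * Real.exp ((∑ k ∈ Finset.univ.erase 0, μ k) - 1 - l))
    (hstatj : ∀ j, j ≠ 0 → q j = p j * Real.exp (-(α * μ j) - 1 - l))
    (hslack : ∀ j, j ≠ 0 → μ j * (α * q j - q 0) = 0)
    (B : Finset (Fin N)) (hB : B = Finset.univ.filter (fun j : Fin N => j ≠ 0 ∧ p 0 < α * p j))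
    (hBne : B.Nonempty) :
    ∀ j ∈ B, (∀ k ∈ B, p k ≤ p j) → (0 < μ j ∧ q 0 = α * q j) := by
  simp only [hB, Finset.mem_filter_univ]
  exact fun j hj hmax ↦ statement9_general hp ⟨hqC.2.2, hμnn, hstat0, hstatj, hslack⟩ hj.1 hj.2
    fun k hk hpk ↦ hmax k ⟨hk, hpk⟩
end

section
/- Let 2 ≤ t ≤ |B| and suppose C = {j_1, …, j_{t−1}} ⊆ A. If g(C) < α·p_{j_t}, then j_t ∈ A, i.e., μ_{j_t} > 0. -/
/-!
Put `T = q i₀ * exp (1 + l)`. Stationarity gives `T = p i₀ * exp (∑ k ≠ i₀, μ k)`, feasibility gives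
`α * p j ≤ T * exp (α * μ j)`, and complementary slackness makes this an equality when `μ j ≠ 0`.
Suppose `μ m = 0`, so that `α * p m ≤ T`. Every active index `j` then has `p m < p j`, so it lies in
any set `S` collecting the indices of larger weight, and `α * p m * exp (α * μ j) ≤ α * p j` on all
of `S`. Multiply these inequalities by `(α * p m) ^ α ≤ T ^ α`. Since `S` contains every active
index, the exponentials cancel against the one in `T ^ α`, leaving
`(α * p m) ^ (|S| + α) ≤ p i₀ ^ α * ∏ j ∈ S, α * p j`, that is, `α * p m ≤ g(S)`.
-/

lemma le_rpow_mul_prod_of_mul_exp_le {ι : Type*} {S : Finset ι} {f w : ι → ℝ} {α a c : ℝ}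
    (hα : 0 < α) (hc : 0 ≤ c) (hca : c ≤ a * Real.exp (∑ j ∈ S, w j))
    (hcf : ∀ j ∈ S, c * Real.exp (α * w j) ≤ f j) :
    c ≤ (a ^ α * ∏ j ∈ S, f j) ^ ((1 : ℝ) / (S.card + α)) := by
  have ha : 0 ≤ a := nonneg_of_mul_nonneg_left (hc.trans hca) (Real.exp_pos _)
  have hprod : c ^ S.card * Real.exp (∑ j ∈ S, w j) ^ α ≤ ∏ j ∈ S, f j := calc
    c ^ S.card * Real.exp (∑ j ∈ S, w j) ^ α = ∏ j ∈ S, c * Real.exp (α * w j) := by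
      rw [Finset.prod_mul_distrib, Finset.prod_const, ← Real.exp_sum, ← Finset.mul_sum,
        ← Real.exp_mul, mul_comm α]
    _ ≤ ∏ j ∈ S, f j := Finset.prod_le_prod (fun _ _ => by positivity) hcf
  rw [one_div, Real.le_rpow_inv_iff_of_pos hc
    (mul_nonneg (by positivity) (hprod.trans' (by positivity))) (by positivity)]
  calc c ^ (S.card + α)
      = c ^ S.card * c ^ α := by
        rw [Real.rpow_add_of_nonneg hc (Nat.cast_nonneg _) hα.le, Real.rpow_natCast]
    _ ≤ c ^ S.card * (a * Real.exp (∑ j ∈ S, w j)) ^ α := by gcongr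
    _ = a ^ α * (c ^ S.card * Real.exp (∑ j ∈ S, w j) ^ α) := by
      rw [Real.mul_rpow ha (Real.exp_pos _).le]
      ring
    _ ≤ a ^ α * ∏ j ∈ S, f j := by gcongr

/-- `S` consists of indices other than `i₀` and lies between `{j | p m < p j}` and
`{j | p m ≤ p j}`: the first indices in an ordering by decreasing weight, up to but possibly not
including `m`. Ties with `p m` may be resolved either way. -/
structure IsUpperSegment {ι β : Type*} [Preorder β] (p : ι → β) (i₀ m : ι) (S : Finset ι) :
    Prop where
  base_notMem : i₀ ∉ S
  le_of_mem : ∀ j ∈ S, p m ≤ p j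
  mem_of_lt : ∀ j, j ≠ i₀ → p m < p j → j ∈ S

lemma isUpperSegment_image_range {ι β : Type*} [DecidableEq ι] [Preorder β] {p : ι → β} {i₀ : ι}
    {B : Finset ι} {e : ℕ → ι} {s : ℕ} (hs : s < B.card) (hi₀ : i₀ ∉ B)
    (hB : ∀ j, j ≠ i₀ → p (e s) < p j → j ∈ B)
    (he_mem : ∀ r, r < B.card → e r ∈ B) (he_surj : ∀ j ∈ B, ∃ r, r < B.card ∧ e r = j)
    (he_anti : ∀ r r', r ≤ r' → r' < B.card → p (e r') ≤ p (e r)) :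
    IsUpperSegment p i₀ (e s) ((Finset.range s).image e) where
  base_notMem hmem := by
    obtain ⟨r, hr, rfl⟩ := Finset.mem_image.mp hmem
    exact hi₀ (he_mem r ((Finset.mem_range.mp hr).trans hs))
  le_of_mem := Finset.forall_mem_image.mpr fun r hr =>
    he_anti r s (Finset.mem_range.mp hr).le hs
  mem_of_lt j hj hlt := by
    obtain ⟨r, hr, rfl⟩ := he_surj j (hB j hj hlt)
    have hrs : r < s := lt_of_not_ge fun hsr => hlt.not_ge (he_anti s r hsr hr)
    exact Finset.mem_image_of_mem e (Finset.mem_range.mpr hrs)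

lemma isUpperSegment_image_range_of_eq_filter {ι : Type*} [Fintype ι] [DecidableEq ι] {α : ℝ}
    {p : ι → ℝ} {i₀ : ι} {B : Finset ι} {e : ℕ → ι} {s : ℕ} (hα : 0 ≤ α)
    (hB : B = Finset.univ.filter fun j => j ≠ i₀ ∧ p i₀ < α * p j) (hs : s < B.card)
    (he_mem : ∀ r, r < B.card → e r ∈ B) (he_surj : ∀ j ∈ B, ∃ r, r < B.card ∧ e r = j)
    (he_anti : ∀ r r', r ≤ r' → r' < B.card → p (e r') ≤ p (e r)) :
    IsUpperSegment p i₀ (e s) ((Finset.range s).image e) := by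
  have mem_B (j : ι) : j ∈ B ↔ j ≠ i₀ ∧ p i₀ < α * p j := by
    simp only [hB, Finset.mem_filter, Finset.mem_univ, true_and]
  refine isUpperSegment_image_range hs (fun hi₀ => ((mem_B i₀).mp hi₀).1 rfl)
    (fun j hj hlt => (mem_B j).mpr ⟨hj, ?_⟩) he_mem he_surj he_anti
  exact ((mem_B _).mp (he_mem s hs)).2.trans_le (mul_le_mul_of_nonneg_left hlt.le hα)

/-- The Karush–Kuhn–Tucker system for minimizing `KL(q‖p)` subject to `α * q j ≤ q i₀` for `j ≠ i₀`,
with multipliers `μ j`. The multiplier `l` of `∑ i, q i = 1` is kept as a parameter, so `q` may have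
any total mass; the value `μ i₀` carries no meaning. -/
structure IsKKTPoint_s10 {ι : Type*} [Fintype ι] [DecidableEq ι] (α : ℝ) (p : ι → ℝ) (i₀ : ι)
    (q : ι → ℝ) (l : ℝ) (μ : ι → ℝ) : Prop where
  feasible : ∀ j, j ≠ i₀ → α * q j ≤ q i₀
  multiplier_nonneg : ∀ j, j ≠ i₀ → 0 ≤ μ j
  stationary_base : q i₀ = p i₀ * Real.exp ((∑ k ∈ Finset.univ.erase i₀, μ k) - 1 - l)
  stationary : ∀ j, j ≠ i₀ → q j = p j * Real.exp (-(α * μ j) - 1 - l)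
  slackness : ∀ j, j ≠ i₀ → μ j * (α * q j - q i₀) = 0

namespace IsKKTPoint_s10

variable {ι : Type*} [Fintype ι] [DecidableEq ι] {α l : ℝ} {p q μ : ι → ℝ} {i₀ j m : ι}
  {S : Finset ι}

lemma base_mul_exp_eq (h : IsKKTPoint_s10 α p i₀ q l μ) :
    q i₀ * Real.exp (1 + l) = p i₀ * Real.exp (∑ k ∈ Finset.univ.erase i₀, μ k) := by
  rw [h.stationary_base, mul_assoc, ← Real.exp_add]
  ring_nf

lemma weight_eq (h : IsKKTPoint_s10 α p i₀ q l μ) (hj : j ≠ i₀) :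
    p j = q j * Real.exp (1 + l) * Real.exp (α * μ j) := by
  have hexp : -(α * μ j) - 1 - l + (1 + l + α * μ j) = 0 := by ring
  rw [h.stationary j hj, mul_assoc, mul_assoc, ← Real.exp_add, ← Real.exp_add, hexp,
    Real.exp_zero, mul_one]

lemma mul_weight_eq_of_multiplier_ne_zero (h : IsKKTPoint_s10 α p i₀ q l μ) (hj : j ≠ i₀)
    (hμj : μ j ≠ 0) : α * p j = q i₀ * Real.exp (1 + l) * Real.exp (α * μ j) := by
  have htight : α * q j = q i₀ :=
    sub_eq_zero.mp ((mul_eq_zero.mp (h.slackness j hj)).resolve_left hμj)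
  rw [h.weight_eq hj, ← htight]
  ring

lemma mul_weight_le_of_multiplier_eq_zero (h : IsKKTPoint_s10 α p i₀ q l μ) (hm : m ≠ i₀)
    (hμm : μ m = 0) : α * p m ≤ q i₀ * Real.exp (1 + l) := by
  rw [h.weight_eq hm, hμm, mul_zero, Real.exp_zero, mul_one, ← mul_assoc]
  gcongr
  exact h.feasible m hm

lemma mul_weight_mul_exp_le (h : IsKKTPoint_s10 α p i₀ q l μ) (hα : 0 ≤ α) (hm : m ≠ i₀)
    (hμm : μ m = 0) (hj : j ≠ i₀) (hmj : p m ≤ p j) :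
    α * p m * Real.exp (α * μ j) ≤ α * p j := by
  by_cases hμj : μ j = 0
  · rw [hμj, mul_zero, Real.exp_zero, mul_one]
    gcongr
  · rw [h.mul_weight_eq_of_multiplier_ne_zero hj hμj]
    exact mul_le_mul_of_nonneg_right (h.mul_weight_le_of_multiplier_eq_zero hm hμm)
      (Real.exp_pos _).le

lemma weight_lt_of_multiplier_ne_zero (h : IsKKTPoint_s10 α p i₀ q l μ) (hα : 0 < α) (hpm : 0 < p m)
    (hm : m ≠ i₀) (hμm : μ m = 0) (hj : j ≠ i₀) (hμj : μ j ≠ 0) : p m < p j := by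
  have hμpos : 0 < μ j := (h.multiplier_nonneg j hj).lt_of_ne' hμj
  have hle := h.mul_weight_le_of_multiplier_eq_zero hm hμm
  refine lt_of_mul_lt_mul_left ?_ hα.le
  calc α * p m ≤ q i₀ * Real.exp (1 + l) := hle
    _ < q i₀ * Real.exp (1 + l) * Real.exp (α * μ j) :=
      lt_mul_of_one_lt_right ((mul_pos hα hpm).trans_le hle)
        (Real.one_lt_exp_iff.mpr (mul_pos hα hμpos))
    _ = α * p j := (h.mul_weight_eq_of_multiplier_ne_zero hj hμj).symm

lemma sum_multiplier_eq (h : IsKKTPoint_s10 α p i₀ q l μ) (hα : 0 < α) (hpm : 0 < p m)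
    (hm : m ≠ i₀) (hμm : μ m = 0) (hS : IsUpperSegment p i₀ m S) :
    ∑ j ∈ S, μ j = ∑ k ∈ Finset.univ.erase i₀, μ k := by
  refine Finset.sum_subset (fun j hj => ?_) fun j hj hjS => ?_
  · exact Finset.mem_erase.mpr ⟨ne_of_mem_of_not_mem hj hS.base_notMem, Finset.mem_univ j⟩
  · have hj₀ := Finset.ne_of_mem_erase hj
    by_contra hμj
    exact hjS (hS.mem_of_lt j hj₀ (h.weight_lt_of_multiplier_ne_zero hα hpm hm hμm hj₀ hμj))

lemma mul_weight_le_rpow_mul_prod (h : IsKKTPoint_s10 α p i₀ q l μ) (hα : 0 < α) (hpm : 0 < p m)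
    (hm : m ≠ i₀) (hμm : μ m = 0) (hS : IsUpperSegment p i₀ m S) :
    α * p m ≤ (p i₀ ^ α * ∏ j ∈ S, α * p j) ^ ((1 : ℝ) / (S.card + α)) := by
  refine le_rpow_mul_prod_of_mul_exp_le (w := μ) hα (mul_pos hα hpm).le ?_ fun j hj => ?_
  · rw [h.sum_multiplier_eq hα hpm hm hμm hS, ← h.base_mul_exp_eq]
    exact h.mul_weight_le_of_multiplier_eq_zero hm hμm
  · exact h.mul_weight_mul_exp_le hα.le hm hμm (ne_of_mem_of_not_mem hj hS.base_notMem)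
      (hS.le_of_mem j hj)

end IsKKTPoint_s10

theorem statement10_general {ι : Type*} [Fintype ι] [DecidableEq ι] {α l : ℝ} {p q μ : ι → ℝ}
    {i₀ m : ι} {S : Finset ι} (hα : 0 < α) (h : IsKKTPoint_s10 α p i₀ q l μ) (hm : m ≠ i₀)
    (hpm : 0 < p m) (hS : IsUpperSegment p i₀ m S)
    (hlt : (p i₀ ^ α * ∏ j ∈ S, α * p j) ^ ((1 : ℝ) / (S.card + α)) < α * p m) :
    0 < μ m :=
  (h.multiplier_nonneg m hm).lt_of_ne' fun hμm =>
    hlt.not_ge (h.mul_weight_le_rpow_mul_prod hα hpm hm hμm hS)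

/-- Let `2 ≤ t ≤ |B|` and `C = {j₁, …, j_{t-1}} ⊆ A` (where `e` enumerates `B` so that
`p (e 0) ≥ p (e 1) ≥ …`, so `j_s = e (s-1)`). If `g C < α * p (j_t)`, then `j_t ∈ A`,
i.e. `μ (j_t) > 0`. -/
theorem statement10 (N : ℕ) [NeZero N] (hN : 2 ≤ N) (α : ℝ) (hα : 1 ≤ α)
    (p : Fin N → ℝ) (hp : ∀ i, 0 < p i) (hps : ∑ i, p i = 1)
    (q : Fin N → ℝ) (hqC : q ∈ C1 N α)
    (hqmin : ∀ r ∈ C1 N α, KLv q p ≤ KLv r p)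
    (hquniq : ∀ r, r ∈ C1 N α → (∀ s ∈ C1 N α, KLv r p ≤ KLv s p) → r = q)
    (hqpos : ∀ i, 0 < q i)
    (l : ℝ) (μ : Fin N → ℝ) (hμnn : ∀ j, j ≠ 0 → 0 ≤ μ j)
    (hstat0 : q 0 = p 0 * Real.exp ((∑ k ∈ Finset.univ.erase 0, μ k) - 1 - l))
    (hstatj : ∀ j, j ≠ 0 → q j = p j * Real.exp (-(α * μ j) - 1 - l))
    (hslack : ∀ j, j ≠ 0 → μ j * (α * q j - q 0) = 0)
    (A : Finset (Fin N)) (hA : A = Finset.univ.filter (fun j : Fin N => j ≠ 0 ∧ 0 < μ j))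
    (B : Finset (Fin N)) (hB : B = Finset.univ.filter (fun j : Fin N => j ≠ 0 ∧ p 0 < α * p j))
    (e : ℕ → Fin N)
    (he_mem : ∀ s, s < B.card → e s ∈ B)
    (he_inj : ∀ s s', s < B.card → s' < B.card → e s = e s' → s = s')
    (he_surj : ∀ j ∈ B, ∃ s, s < B.card ∧ e s = j)
    (he_anti : ∀ s s', s ≤ s' → s' < B.card → p (e s') ≤ p (e s))
    (t : ℕ) (ht2 : 2 ≤ t) (htB : t ≤ B.card)
    (C : Finset (Fin N)) (hC : C = (Finset.range (t - 1)).image e)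
    (hCA : C ⊆ A)
    (hlt : gfun α p C < α * p (e (t - 1))) :
    0 < μ (e (t - 1)) := by
  have hs : t - 1 < B.card := by omega
  have hm : e (t - 1) ≠ 0 := (Finset.mem_filter.mp (hB ▸ he_mem _ hs)).2.1
  have hα₀ : 0 < α := zero_lt_one.trans_le hα
  exact statement10_general hα₀ ⟨hqC.2.2, hμnn, hstat0, hstatj, hslack⟩ hm (hp _)
    (isUpperSegment_image_range_of_eq_filter hα₀.le hB hs he_mem he_surj he_anti)
    (hC ▸ hlt)
end

section
/- Suppose the active set satisfies A = {2, …, N} (all KKT multipliers are strictly positive). Then the unique minimizer of (P) is q*_1 = α/(α + N − 1) and q*_k = 1/(α + N − 1) for every k ≠ 1. In particular, q* equals the label-smoothed one-hot label (1 − s)·e_1 + (s/N)·(1, 1, …, 1) with smoothing factor s = N/(α − 1 + N), where e_1 = (1, 0, …, 0). -/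
/-! A strictly positive multiplier forces its constraint to be tight, by complementary slackness.
When every constraint is tight, all the coordinates `q j` with `j ≠ i₀` equal `q i₀ / α`, and
`∑ i, q i = 1` then leaves a single unknown. -/

section LabelSmoothing

open Fintype (card)

variable {ι K : Type*} [Fintype ι]

/-- The one-hot label at `i₀`, smoothed with factor `s`: the affine combination, with weights
`1 - s` and `s`, of the one-hot label and the uniform label. -/
def smoothedOneHot [DecidableEq ι] [DivisionRing K] (s : K) (i₀ : ι) : ι → K :=
  fun i ↦ (1 - s) * (Pi.single i₀ 1 : ι → K) i + s / card ι

theorem add_card_sub_one_mul_eq_of_tight [CommRing K] {α : K} {q : ι → K} {i₀ : ι}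
    (htight : ∀ j, j ≠ i₀ → α * q j = q i₀) (hsum : ∑ i, q i = 1) :
    (α + card ι - 1) * q i₀ = α := by
  classical
  have hcard : ((Finset.univ.erase i₀).card : K) = card ι - 1 :=
    Finset.cast_card_erase_of_mem (Finset.mem_univ i₀)
  calc (α + card ι - 1) * q i₀
      = α * q i₀ + ∑ _j ∈ Finset.univ.erase i₀, q i₀ := by
        rw [Finset.sum_const, nsmul_eq_mul, hcard]; ring
    _ = α * q i₀ + ∑ j ∈ Finset.univ.erase i₀, α * q j := by
        congr 1
        exact Finset.sum_congr rfl fun j hj ↦ (htight j (Finset.ne_of_mem_erase hj)).symm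
    _ = α * ∑ i, q i := by
        rw [Finset.add_sum_erase _ (fun i ↦ α * q i) (Finset.mem_univ i₀), Finset.mul_sum]
    _ = α := by rw [hsum, mul_one]

variable [DecidableEq ι] [Field K] {α : K}

theorem smoothedOneHot_card_div_self {i₀ : ι} (hcard : (card ι : K) ≠ 0)
    (hD : α + card ι - 1 ≠ 0) :
    smoothedOneHot (card ι / (α - 1 + card ι)) i₀ i₀ = α / (α + card ι - 1) := by
  rw [smoothedOneHot, Pi.single_eq_same, sub_add_eq_add_sub α]
  field_simp
  ring

theorem smoothedOneHot_card_div_of_ne {i₀ j : ι} (hcard : (card ι : K) ≠ 0) (hj : j ≠ i₀) :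
    smoothedOneHot (card ι / (α - 1 + card ι)) i₀ j = 1 / (α + card ι - 1) := by
  rw [smoothedOneHot, Pi.single_eq_of_ne hj, mul_zero, zero_add, sub_add_eq_add_sub α,
    div_div_cancel_left' hcard, one_div]

theorem statement14_general {q μ : ι → K} {i₀ : ι} (hcard : (card ι : K) ≠ 0) (hα : α ≠ 0)
    (hsum : ∑ i, q i = 1) (hslack : ∀ j, j ≠ i₀ → μ j * (α * q j - q i₀) = 0)
    (hactive : ∀ j, j ≠ i₀ → μ j ≠ 0) :
    q i₀ = α / (α + card ι - 1) ∧
    (∀ k, k ≠ i₀ → q k = 1 / (α + card ι - 1)) ∧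
    q = smoothedOneHot (card ι / (α - 1 + card ι)) i₀ := by
  have htight : ∀ j, j ≠ i₀ → α * q j = q i₀ := fun j hj ↦
    sub_eq_zero.mp ((mul_eq_zero.mp (hslack j hj)).resolve_left (hactive j hj))
  have hmul : (α + card ι - 1) * q i₀ = α := add_card_sub_one_mul_eq_of_tight htight hsum
  have hD : α + card ι - 1 ≠ 0 := left_ne_zero_of_mul (hmul ▸ hα)
  have hself : q i₀ = α / (α + card ι - 1) := eq_div_of_mul_eq hD (by rw [mul_comm, hmul])
  have hother : ∀ k, k ≠ i₀ → q k = 1 / (α + card ι - 1) := fun k hk ↦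
    mul_left_cancel₀ hα (by rw [htight k hk, hself, mul_one_div])
  refine ⟨hself, hother, funext fun i ↦ ?_⟩
  obtain rfl | hi := eq_or_ne i i₀
  · rw [hself, smoothedOneHot_card_div_self hcard hD]
  · rw [hother i hi, smoothedOneHot_card_div_of_ne hcard hi]

end LabelSmoothing

/-- If the active set is everything, `A = {2, …, N}` (all KKT multipliers strictly
positive), then the unique minimizer of (P) is `q* 0 = α/(α+N-1)` and
`q* k = 1/(α+N-1)` for `k ≠ 0`; i.e. `q*` is the label-smoothed one-hot label
`(1-s) • e₀ + (s/N) • (1,…,1)` with smoothing factor `s = N/(α-1+N)`. -/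
theorem statement14 (N : ℕ) [NeZero N] (hN : 2 ≤ N) (α : ℝ) (hα : 1 ≤ α)
    (p : Fin N → ℝ) (hp : ∀ i, 0 < p i) (hps : ∑ i, p i = 1)
    (q : Fin N → ℝ) (hqC : q ∈ C1 N α)
    (hqmin : ∀ r ∈ C1 N α, KLv q p ≤ KLv r p)
    (hquniq : ∀ r, r ∈ C1 N α → (∀ s ∈ C1 N α, KLv r p ≤ KLv s p) → r = q)
    (hqpos : ∀ i, 0 < q i)
    (l : ℝ) (μ : Fin N → ℝ) (hμnn : ∀ j, j ≠ 0 → 0 ≤ μ j)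
    (hstat0 : q 0 = p 0 * Real.exp ((∑ k ∈ Finset.univ.erase 0, μ k) - 1 - l))
    (hstatj : ∀ j, j ≠ 0 → q j = p j * Real.exp (-(α * μ j) - 1 - l))
    (hslack : ∀ j, j ≠ 0 → μ j * (α * q j - q 0) = 0)
    (hAfull : ∀ j, j ≠ 0 → 0 < μ j) :
    q 0 = α / (α + N - 1) ∧
    (∀ k, k ≠ 0 → q k = 1 / (α + N - 1)) ∧
    (∀ i, q i = (1 - N / (α - 1 + N)) * (if i = 0 then (1 : ℝ) else 0) +
      (N / (α - 1 + N)) / N) := by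
  simpa only [funext_iff, smoothedOneHot, Pi.single_apply, Fintype.card_fin] using
    statement14_general (by simp [NeZero.ne N]) (by positivity) hqC.2.1 hslack
      fun j hj ↦ (hAfull j hj).ne'
end
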